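/- arXiv:1508.06842 — 3 statements merged into one kernel-verified Lean document; each statement's English description precedes it below -/
import Mathlib

section
/- Let ω_f be a real number with ω_f² ≠ 1. If the parameters satisfy ν₁² = 2ω_f² − λ₁² and σ = c_h(γ²ω_f² + 64ω_f⁴ − 128ω_f²λ₁² + 64λ₁⁴) / (96 r_g γ (ω_f² − 1)), then i·ω_f is an eigenvalue of A_u, i.e. det(i·ω_f·I₄ − A_u) = 0 (the pitch-flap flutter boundary). -/
/-!
If `M` is invertible, then `det M * det (s - A) = det (s² M + s C + K)` for the state matrix `A` of
`M x'' + C x' + K x = 0`, so eigenvalues of `A` are roots of the quadratic pencil. For the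
pitch-flap matrices, with `d = γ / 8`, `κ = -12 r_g σ / c_h`, `k₁ = ν₁²` and `k₂ = λ₁²`, the pencil
has determinant `(s² + d s + k₁) (s² + d s + k₂) + κ d (s² + 1)`. At `s = iω` its imaginary part
vanishes when `k₁ + k₂ = 2 ω²`, which fixes `ν₁²`, and its real part is affine in `κ` with slope
`d (1 - ω²)`, so that its vanishing can be solved for `σ` when `ω² ≠ 1`.
-/

open Matrix

section SecondOrderSystem

variable {n R S : Type*} [Fintype n] [DecidableEq n] [CommRing R] [CommRing S]

/-- The value at `s` of the quadratic matrix pencil of `M x'' + C x' + K x = 0`. -/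
def quadraticPencil (M C K : Matrix n n R) (s : R) : Matrix n n R :=
  s ^ 2 • M + s • C + K

/-- The state matrix of `M x'' + C x' + K x = 0` in the coordinates `(x, x')`. It is meaningful only
for invertible `M`, since `M⁻¹ = 0` otherwise. -/
noncomputable def stateMatrix (M C K : Matrix n n R) : Matrix (n ⊕ n) (n ⊕ n) R :=
  fromBlocks 0 1 (-(M⁻¹ * K)) (-(M⁻¹ * C))

theorem map_nonsing_inv_of_isUnit_det (f : R →+* S) {M : Matrix n n R} (hM : IsUnit M.det) :
    M⁻¹.map f = (M.map f)⁻¹ := by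
  refine (inv_eq_left_inv ?_).symm
  rw [← Matrix.map_mul, nonsing_inv_mul M hM, Matrix.map_one f f.map_zero f.map_one]

theorem stateMatrix_map (f : R →+* S) {M : Matrix n n R} (hM : IsUnit M.det)
    (C K : Matrix n n R) :
    (stateMatrix M C K).map f = stateMatrix (M.map f) (C.map f) (K.map f) := by
  simp only [stateMatrix, fromBlocks_map, Matrix.map_zero f f.map_zero,
    Matrix.map_one f f.map_zero f.map_one, Matrix.map_neg f f.map_neg, Matrix.map_mul,
    map_nonsing_inv_of_isUnit_det f hM]

theorem det_smul_one_sub_companion (C K : Matrix n n R) (s : R) :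
    (s • (1 : Matrix (n ⊕ n) (n ⊕ n) R) - fromBlocks 0 1 (-K) (-C)).det =
      (quadraticPencil 1 C K s).det := by
  -- Adding `s - 1` times the second block column to the first makes the top left block `1`.
  have hshear : (s • (1 : Matrix (n ⊕ n) (n ⊕ n) R) - fromBlocks 0 1 (-K) (-C)) *
      fromBlocks 1 0 ((s - 1) • 1) 1 =
        fromBlocks 1 (-1) (K + (s - 1) • (s • 1 + C)) (s • 1 + C) := by
    rw [← fromBlocks_one, fromBlocks_smul, sub_eq_add_neg, fromBlocks_neg, fromBlocks_add,
      fromBlocks_multiply]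
    congr 1
    · simp [sub_smul]
    all_goals simp
  calc (s • (1 : Matrix (n ⊕ n) (n ⊕ n) R) - fromBlocks 0 1 (-K) (-C)).det
      = (fromBlocks 1 (-1) (K + (s - 1) • (s • 1 + C)) (s • 1 + C)).det := by
        rw [← hshear, det_mul, det_fromBlocks_zero₁₂, det_one, mul_one, mul_one]
    _ = (quadraticPencil 1 C K s).det := by
        rw [det_fromBlocks_one₁₁, quadraticPencil]
        congr 1
        rw [mul_neg, mul_one]
        module

theorem det_mul_det_smul_one_sub_stateMatrix {M : Matrix n n R} (hM : IsUnit M.det)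
    (C K : Matrix n n R) (s : R) :
    M.det * (s • (1 : Matrix (n ⊕ n) (n ⊕ n) R) - stateMatrix M C K).det =
      (quadraticPencil M C K s).det := by
  rw [stateMatrix, det_smul_one_sub_companion, ← det_mul]
  simp only [quadraticPencil, mul_add, mul_smul_comm, mul_one, mul_nonsing_inv_cancel_left M _ hM]

theorem det_smul_one_sub_stateMatrix_eq_zero_iff {M : Matrix n n R} (hM : IsUnit M.det)
    (C K : Matrix n n R) (s : R) :
    (s • (1 : Matrix (n ⊕ n) (n ⊕ n) R) - stateMatrix M C K).det = 0 ↔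
      (quadraticPencil M C K s).det = 0 := by
  rw [← det_mul_det_smul_one_sub_stateMatrix hM, hM.mul_right_eq_zero]

end SecondOrderSystem

theorem det_quadraticPencil_pitchFlap {R : Type*} [CommRing R] (κ d k₁ k₂ s : R) :
    (quadraticPencil !![1, κ; 0, 1] !![d, 0; 0, d] !![k₁, κ; -d, k₂] s).det =
      (s ^ 2 + d * s + k₁) * (s ^ 2 + d * s + k₂) + κ * d * (s ^ 2 + 1) := by
  simp only [quadraticPencil, smul_of, smul_cons, smul_empty, smul_eq_mul, of_add_of, add_cons,
    empty_add_empty, head_cons, tail_cons, det_fin_two_of]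
  ring

theorem pitchFlap_characteristic_I_mul_eq_zero_iff (κ d k₁ k₂ ω : ℝ) :
    ((Complex.I * ω) ^ 2 + d * (Complex.I * ω) + k₁) *
        ((Complex.I * ω) ^ 2 + d * (Complex.I * ω) + k₂) +
          κ * d * ((Complex.I * ω) ^ 2 + 1) = 0 ↔
      κ * d * (ω ^ 2 - 1) = (k₁ - ω ^ 2) * (k₂ - ω ^ 2) - d ^ 2 * ω ^ 2 ∧
        d * ω * (k₁ + k₂ - 2 * ω ^ 2) = 0 := by
  have hcartesian : ((Complex.I * ω) ^ 2 + d * (Complex.I * ω) + k₁) *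
      ((Complex.I * ω) ^ 2 + d * (Complex.I * ω) + k₂) + κ * d * ((Complex.I * ω) ^ 2 + 1) =
        ⟨(k₁ - ω ^ 2) * (k₂ - ω ^ 2) - d ^ 2 * ω ^ 2 - κ * d * (ω ^ 2 - 1),
          d * ω * (k₁ + k₂ - 2 * ω ^ 2)⟩ := by
    rw [mul_pow, Complex.I_sq, Complex.mk_eq_add_mul_I]
    push_cast
    linear_combination ((d : ℂ) ^ 2 * ω ^ 2) * Complex.I_sq
  rw [hcartesian, Complex.ext_iff, Complex.zero_re, Complex.zero_im, sub_eq_zero, eq_comm]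

theorem det_I_mul_smul_one_sub_pitchFlap_eq_zero_iff (κ d k₁ k₂ ω : ℝ) :
    ((Complex.I * (ω : ℂ)) • (1 : Matrix (Fin 2 ⊕ Fin 2) (Fin 2 ⊕ Fin 2) ℂ) -
        (stateMatrix !![1, κ; 0, 1] !![d, 0; 0, d] !![k₁, κ; -d, k₂]).map Complex.ofReal).det = 0 ↔
      κ * d * (ω ^ 2 - 1) = (k₁ - ω ^ 2) * (k₂ - ω ^ 2) - d ^ 2 * ω ^ 2 ∧
        d * ω * (k₁ + k₂ - 2 * ω ^ 2) = 0 := by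
  have hM : IsUnit (!![1, κ; 0, 1] : Matrix (Fin 2) (Fin 2) ℝ).det := by simp
  have hmap : (stateMatrix !![1, κ; 0, 1] !![d, 0; 0, d] !![k₁, κ; -d, k₂]).map Complex.ofReal =
      stateMatrix !![1, (κ : ℂ); 0, 1] !![(d : ℂ), 0; 0, (d : ℂ)]
        !![(k₁ : ℂ), (κ : ℂ); -(d : ℂ), (k₂ : ℂ)] :=
    (stateMatrix_map Complex.ofRealHom hM _ _).trans
      (by congr 1 <;> simp [← Matrix.ext_iff, Fin.forall_fin_two])
  rw [hmap, det_smul_one_sub_stateMatrix_eq_zero_iff (by simp),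
    det_quadraticPencil_pitchFlap, pitchFlap_characteristic_I_mul_eq_zero_iff]

theorem pitchFlap_coupling_eq_iff {F : Type*} [Field F] [CharZero F] {γ lam₁ rg ch σ ω : F}
    (hγ : γ ≠ 0) (hr : rg ≠ 0) (hc : ch ≠ 0) (hω : ω ^ 2 ≠ 1) :
    -12 * rg * σ / ch * (γ / 8) * (ω ^ 2 - 1) =
        -(ω ^ 2 - lam₁ ^ 2) ^ 2 - (γ / 8) ^ 2 * ω ^ 2 ↔
      σ = ch * (γ ^ 2 * ω ^ 2 + 64 * ω ^ 4 - 128 * ω ^ 2 * lam₁ ^ 2 + 64 * lam₁ ^ 4) /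
        (96 * rg * γ * (ω ^ 2 - 1)) := by
  have hω' : ω ^ 2 - 1 ≠ 0 := sub_ne_zero.mpr hω
  field_simp
  constructor <;> intro h <;> linear_combination -h

/-- If `ω_f² ≠ 1`, `ν₁² = 2ω_f² − λ₁²` and
`σ = c_h(γ²ω_f² + 64ω_f⁴ − 128ω_f²λ₁² + 64λ₁⁴)/(96 r_g γ (ω_f² − 1))`, then `i·ω_f` is an
eigenvalue of `A_u`, i.e. `det(i·ω_f·I₄ − A_u) = 0` (the pitch-flap flutter boundary). -/
theorem flutter_boundary_sufficient
    (γ lam₁ rg ch σ ν₁sq : ℝ)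
    (hγ : 0 < γ) (hlam : 0 < lam₁) (hr : 0 < rg) (hc : 0 < ch)
    (M C K : Matrix (Fin 2) (Fin 2) ℝ)
    (hM : M = !![1, -12 * rg * σ / ch; 0, 1])
    (hC : C = !![γ / 8, 0; 0, γ / 8])
    (hK : K = !![ν₁sq, -12 * rg * σ / ch; -γ / 8, lam₁ ^ 2])
    (Au : Matrix (Fin 2 ⊕ Fin 2) (Fin 2 ⊕ Fin 2) ℝ)
    (hAu : Au = Matrix.fromBlocks 0 1 (-(M⁻¹ * K)) (-(M⁻¹ * C)))
    (ωf : ℝ) (hω : ωf ^ 2 ≠ 1)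
    (hν : ν₁sq = 2 * ωf ^ 2 - lam₁ ^ 2)
    (hσ : σ = ch * (γ ^ 2 * ωf ^ 2 + 64 * ωf ^ 4 - 128 * ωf ^ 2 * lam₁ ^ 2 + 64 * lam₁ ^ 4) /
      (96 * rg * γ * (ωf ^ 2 - 1))) :
    ((Complex.I * (ωf : ℂ)) • (1 : Matrix (Fin 2 ⊕ Fin 2) (Fin 2 ⊕ Fin 2) ℂ) -
        Au.map (Complex.ofReal)).det = 0 := by
  have hreal : -12 * rg * σ / ch * (γ / 8) * (ωf ^ 2 - 1) =
      (ν₁sq - ωf ^ 2) * (lam₁ ^ 2 - ωf ^ 2) - (γ / 8) ^ 2 * ωf ^ 2 := by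
    rw [(pitchFlap_coupling_eq_iff hγ.ne' hr.ne' hc.ne' hω).mpr hσ, hν]
    ring
  have himag : γ / 8 * ωf * (ν₁sq + lam₁ ^ 2 - 2 * ωf ^ 2) = 0 := by
    rw [hν]
    ring
  rw [neg_div] at hK
  subst hM hC hK hAu
  exact (det_I_mul_smul_one_sub_pitchFlap_eq_zero_iff ..).mpr ⟨hreal, himag⟩
end

section
/- Let ω be a real number with ω ≠ 0 and ω² ≠ 1. If i·ω is an eigenvalue of A_u, i.e. det(i·ω·I₄ − A_u) = 0, then necessarily ν₁² = 2ω² − λ₁² and σ = c_h(γ²ω² + 64ω⁴ − 128ω²λ₁² + 64λ₁⁴) / (96 r_g γ (ω² − 1)). -/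
/-!
Let `A` be the state matrix of `M q'' + C q' + K q = 0`. One column shear makes the upper left
block of `s I - A` the identity, and its Schur complement yields
`det M * det (s I - A) = det (s² M + s C + K)`. For the pitch-flap matrices `det M = 1`, and the
right-hand side is
`(s² + g s + ν₁²) (s² + g s + λ₁²) - g a (s² + 1)` with `g = γ / 8` and `a = 12 r_g σ / c_h`.
At `s = i ω` its imaginary part is `g ω (ν₁² + λ₁² - 2 ω²)`, which fixes `ν₁²`. The remaining real
equation is linear in `a`, hence in `σ`, with leading coefficient `g (ω² - 1)`.
-/

section SecondOrder

open Matrix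

variable {n R S : Type*} [Fintype n] [DecidableEq n] [CommRing R] [CommRing S]

theorem det_smul_one_sub_fromBlocks_zero_one_neg_neg (P Q : Matrix n n R) (s : R) :
    (s • (1 : Matrix (n ⊕ n) (n ⊕ n) R) - fromBlocks 0 1 (-P) (-Q)).det =
      (s ^ 2 • (1 : Matrix n n R) + s • Q + P).det := by
  have hblocks : s • (1 : Matrix (n ⊕ n) (n ⊕ n) R) - fromBlocks 0 1 (-P) (-Q) =
      fromBlocks (s • 1) (-1) P (s • 1 + Q) := by
    rw [← fromBlocks_one, fromBlocks_smul, sub_eq_add_neg, fromBlocks_neg, fromBlocks_add]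
    simp
  -- The factor `s - 1` turns the upper left block `s • 1` into `1`, whether or not `s` is a unit.
  have hshear : fromBlocks (s • 1) (-1) P (s • 1 + Q) *
      fromBlocks (1 : Matrix n n R) 0 ((s - 1) • 1) 1 =
      fromBlocks 1 (-1) (P + (s - 1) • (s • 1 + Q)) (s • 1 + Q) := by
    simp only [fromBlocks_multiply, mul_smul_comm, mul_one, mul_zero, zero_add]
    congr 1
    module
  calc
    _ = (fromBlocks (s • 1) (-1) P (s • 1 + Q) *
        fromBlocks (1 : Matrix n n R) 0 ((s - 1) • 1) 1).det := by
        rw [hblocks, det_mul, det_fromBlocks_zero₁₂, det_one, mul_one, mul_one]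
    _ = (s • 1 + Q - (P + (s - 1) • (s • 1 + Q)) * -1).det := by
        rw [hshear, det_fromBlocks_one₁₁]
    _ = _ := by
        congr 1
        rw [mul_neg, mul_one]
        module

/-- The state matrix of the second-order linear system `M q'' + C q' + K q = 0` in the state
`(q, q')`. It is meaningful only when `M.det` is a unit, since otherwise `M⁻¹ = 0`. -/
noncomputable def secondOrderStateMatrix (M C K : Matrix n n R) : Matrix (n ⊕ n) (n ⊕ n) R :=
  fromBlocks 0 1 (-(M⁻¹ * K)) (-(M⁻¹ * C))

theorem map_secondOrderStateMatrix (f : R →+* S) (M C K : Matrix n n R) :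
    (secondOrderStateMatrix M C K).map f =
      fromBlocks 0 1 (-(M⁻¹ * K).map f) (-(M⁻¹ * C).map f) := by
  rw [secondOrderStateMatrix, fromBlocks_map, Matrix.map_neg _ (map_neg f),
    Matrix.map_neg _ (map_neg f), Matrix.map_zero _ (map_zero f),
    Matrix.map_one _ (map_zero f) (map_one f)]

theorem det_map_mul_det_smul_one_sub_map_secondOrderStateMatrix (f : R →+* S)
    {M : Matrix n n R} (hM : IsUnit M.det) (C K : Matrix n n R) (s : S) :
    (M.map f).det * (s • 1 - (secondOrderStateMatrix M C K).map f).det =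
      (s ^ 2 • M.map f + s • C.map f + K.map f).det := by
  have hcancel (X : Matrix n n R) : M.map f * (M⁻¹ * X).map f = X.map f := by
    rw [← Matrix.map_mul, mul_nonsing_inv_cancel_left _ _ hM]
  rw [map_secondOrderStateMatrix, det_smul_one_sub_fromBlocks_zero_one_neg_neg, ← det_mul,
    mul_add, mul_add, mul_smul_comm, mul_smul_comm, mul_one, hcancel, hcancel]

end SecondOrder

section PitchFlap

open Matrix

/-- The state matrix of the pitch-flap dynamics in reduced parameters: `a = 12 r_g σ / c_h` is the
coupling, `g = γ / 8` the damping, and `p = ν₁²`, `l = λ₁²` are the squared frequencies. -/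
noncomputable def pitchFlapStateMatrix {R : Type*} [CommRing R] (a g p l : R) :
    Matrix (Fin 2 ⊕ Fin 2) (Fin 2 ⊕ Fin 2) R :=
  secondOrderStateMatrix !![1, -a; 0, 1] !![g, 0; 0, g] !![p, -a; -g, l]

theorem det_smul_one_sub_map_pitchFlapStateMatrix {R S : Type*} [CommRing R] [CommRing S]
    (f : R →+* S) (a g p l : R) (s : S) :
    (s • 1 - (pitchFlapStateMatrix a g p l).map f).det =
      (s ^ 2 + f g * s + f p) * (s ^ 2 + f g * s + f l) - f g * f a * (s ^ 2 + 1) := by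
  have hdet : (!![1, -a; 0, 1] : Matrix (Fin 2) (Fin 2) R).det = 1 := by simp [det_fin_two]
  have hdet_map : ((!![1, -a; 0, 1] : Matrix (Fin 2) (Fin 2) R).map f).det = 1 := by
    rw [← RingHom.mapMatrix_apply, ← RingHom.map_det, hdet, map_one]
  have hpencil : s ^ 2 • (!![1, -a; 0, 1] : Matrix (Fin 2) (Fin 2) R).map f +
      s • (!![g, 0; 0, g] : Matrix (Fin 2) (Fin 2) R).map f +
      (!![p, -a; -g, l] : Matrix (Fin 2) (Fin 2) R).map f =
      !![s ^ 2 + f g * s + f p, -(f a * (s ^ 2 + 1)); -f g, s ^ 2 + f g * s + f l] := by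
    ext i j
    fin_cases i <;> fin_cases j <;> simp <;> ring
  have hchar := det_map_mul_det_smul_one_sub_map_secondOrderStateMatrix f
    (hdet ▸ isUnit_one) !![g, 0; 0, g] !![p, -a; -g, l] s
  rw [hdet_map, one_mul, hpencil, det_fin_two_of] at hchar
  rw [pitchFlapStateMatrix, hchar]
  ring

theorem det_I_mul_smul_one_sub_map_pitchFlapStateMatrix_eq_zero_iff {a g p l ω : ℝ}
    (hg : g ≠ 0) (hω : ω ≠ 0) :
    ((Complex.I * (ω : ℂ)) • 1 - (pitchFlapStateMatrix a g p l).map Complex.ofReal).det = 0 ↔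
      p = 2 * ω ^ 2 - l ∧ g * a * (ω ^ 2 - 1) = (ω ^ 2 - l) ^ 2 + g ^ 2 * ω ^ 2 := by
  have hdet : ((Complex.I * (ω : ℂ)) • 1 -
      (pitchFlapStateMatrix a g p l).map Complex.ofReal).det =
      ⟨(p - ω ^ 2) * (l - ω ^ 2) - g ^ 2 * ω ^ 2 - g * a * (1 - ω ^ 2),
        g * ω * (p + l - 2 * ω ^ 2)⟩ := by
    refine (det_smul_one_sub_map_pitchFlapStateMatrix Complex.ofRealHom a g p l _).trans ?_
    rw [Complex.mk_eq_add_mul_I, mul_pow, Complex.I_sq]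
    simp only [Complex.ofRealHom_eq_coe]
    push_cast
    linear_combination (g : ℂ) ^ 2 * (ω : ℂ) ^ 2 * Complex.I_sq
  have him : g * ω * (p + l - 2 * ω ^ 2) = 0 ↔ p = 2 * ω ^ 2 - l := by
    rw [mul_eq_zero_iff_left (mul_ne_zero hg hω), sub_eq_zero, eq_sub_iff_add_eq]
  rw [hdet, Complex.ext_iff, Complex.zero_re, Complex.zero_im, him, and_comm]
  refine and_congr_right fun hp ↦ ?_
  subst hp
  constructor <;> intro h <;> linear_combination h

end PitchFlap

/-- If `ω ≠ 0`, `ω² ≠ 1`, and `i·ω` is an eigenvalue of `A_u`, i.e.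
`det(i·ω·I₄ − A_u) = 0`, then necessarily `ν₁² = 2ω² − λ₁²` and
`σ = c_h(γ²ω² + 64ω⁴ − 128ω²λ₁² + 64λ₁⁴)/(96 r_g γ (ω² − 1))`. -/
theorem flutter_boundary_necessary
    (γ lam₁ rg ch σ ν₁sq : ℝ)
    (hγ : 0 < γ) (hlam : 0 < lam₁) (hr : 0 < rg) (hc : 0 < ch)
    (M C K : Matrix (Fin 2) (Fin 2) ℝ)
    (hM : M = !![1, -12 * rg * σ / ch; 0, 1])
    (hC : C = !![γ / 8, 0; 0, γ / 8])
    (hK : K = !![ν₁sq, -12 * rg * σ / ch; -γ / 8, lam₁ ^ 2])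
    (Au : Matrix (Fin 2 ⊕ Fin 2) (Fin 2 ⊕ Fin 2) ℝ)
    (hAu : Au = Matrix.fromBlocks 0 1 (-(M⁻¹ * K)) (-(M⁻¹ * C)))
    (ω : ℝ) (hω0 : ω ≠ 0) (hω1 : ω ^ 2 ≠ 1)
    (hroot : ((Complex.I * (ω : ℂ)) • (1 : Matrix (Fin 2 ⊕ Fin 2) (Fin 2 ⊕ Fin 2) ℂ) -
        Au.map (Complex.ofReal)).det = 0) :
    ν₁sq = 2 * ω ^ 2 - lam₁ ^ 2 ∧
      σ = ch * (γ ^ 2 * ω ^ 2 + 64 * ω ^ 4 - 128 * ω ^ 2 * lam₁ ^ 2 + 64 * lam₁ ^ 4) /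
        (96 * rg * γ * (ω ^ 2 - 1)) := by
  have hstate : Au = pitchFlapStateMatrix (12 * rg * σ / ch) (γ / 8) ν₁sq (lam₁ ^ 2) := by
    simp only [hAu, hM, hC, hK, pitchFlapStateMatrix, secondOrderStateMatrix, neg_mul, neg_div]
  rw [hstate, det_I_mul_smul_one_sub_map_pitchFlapStateMatrix_eq_zero_iff (by positivity) hω0]
    at hroot
  obtain ⟨hν, hσ⟩ := hroot
  have hω : ω ^ 2 - 1 ≠ 0 := sub_ne_zero.mpr hω1
  refine ⟨hν, ?_⟩
  field_simp at hσ ⊢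
  linear_combination hσ
end

section
/- The set of real frequencies ω for which there exists a real delay τ with det(i·ω·I₄ − A − e^{−i·ω·τ}·A_d) = 0 is finite, containing at most 8 elements. (The function ω ↦ |det(i·ω·I₄ − A)|² − |det(i·ω·I₄ − A − A_d) − det(i·ω·I₄ − A)|² is a polynomial in ω of degree 8 with leading coefficient 1, hence has at most 8 real roots, and every crossing frequency must be one of them.) -/
/-! When `A_d = u vᵀ` has rank one, `det (s - A - z A_d)` is affine in `z`, so the characteristic
equation reads `P(s) + e^{-sτ} Q(s) = 0`. Here `P` is the characteristic polynomial of `A`, and `Q`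
is the difference of the characteristic polynomials of `A + A_d` and `A`; since both are monic of
degree `n`, `deg Q < n`. At `s = iω` the exponential has modulus one, so `|P(iω)|² = |Q(iω)|²`,
whatever the delay. For real `ω` the difference of the two sides is a polynomial in `ω`, of degree
exactly `2n`. -/

open Polynomial Matrix

section RCLike

variable {𝕜 : Type*} [RCLike 𝕜]

/-- The polynomial `p · p̄`, where `p̄` is `p` with conjugated coefficients; its values on the real
axis are those of `|p|²`. -/
noncomputable def normSqPolynomial (p : 𝕜[X]) : 𝕜[X] :=
  p * p.map (starRingEnd 𝕜)

theorem eval_ofReal_normSqPolynomial (p : 𝕜[X]) (x : ℝ) :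
    (normSqPolynomial p).eval (x : 𝕜) = (‖p.eval (x : 𝕜)‖ : 𝕜) ^ 2 := by
  have heval : (p.map (starRingEnd 𝕜)).eval (x : 𝕜) = starRingEnd 𝕜 (p.eval (x : 𝕜)) := by
    simpa using eval_map_apply (starRingEnd 𝕜) (x : 𝕜)
  rw [normSqPolynomial, eval_mul, heval, RCLike.mul_conj]

theorem degree_normSqPolynomial (p : 𝕜[X]) :
    (normSqPolynomial p).degree = p.degree + p.degree := by
  rw [normSqPolynomial, degree_mul, degree_map]

theorem degree_normSqPolynomial_lt {p q : 𝕜[X]} (hqp : q.degree < p.degree) :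
    (normSqPolynomial q).degree < (normSqPolynomial p).degree := by
  rw [degree_normSqPolynomial, degree_normSqPolynomial]
  calc q.degree + q.degree ≤ p.degree + q.degree := by gcongr
    _ < p.degree + p.degree := WithBot.add_lt_add_left (ne_bot_of_gt hqp) hqp

theorem encard_setOf_eval_ofReal_eq_zero_le {p : 𝕜[X]} (hp : p ≠ 0) :
    {x : ℝ | p.eval (x : 𝕜) = 0}.encard ≤ p.natDegree := by
  have hmaps : Set.MapsTo ((↑) : ℝ → 𝕜) {x : ℝ | p.eval (x : 𝕜) = 0} (p.rootSet 𝕜) := by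
    intro x hx
    simpa [mem_rootSet_of_ne hp] using hx
  calc {x : ℝ | p.eval (x : 𝕜) = 0}.encard
      ≤ (p.rootSet 𝕜).encard :=
        Set.encard_le_encard_of_injOn hmaps RCLike.ofReal_injective.injOn
    _ ≤ p.natDegree := by
        rw [← (p.rootSet_finite 𝕜).cast_ncard_eq]
        exact_mod_cast p.ncard_rootSet_le 𝕜

theorem encard_setOf_norm_eval_ofReal_eq_le {p q : 𝕜[X]} (hqp : q.degree < p.degree) :
    {x : ℝ | ‖p.eval (x : 𝕜)‖ = ‖q.eval (x : 𝕜)‖}.encard ≤ 2 * p.natDegree := by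
  have hdeg : (normSqPolynomial p - normSqPolynomial q).degree = p.degree + p.degree := by
    rw [degree_sub_eq_left_of_degree_lt (degree_normSqPolynomial_lt hqp), degree_normSqPolynomial]
  have hp : p ≠ 0 := ne_zero_of_degree_gt hqp
  have hne : normSqPolynomial p - normSqPolynomial q ≠ 0 := by
    rw [← degree_ne_bot, hdeg]
    simp [hp]
  have hnat : (normSqPolynomial p - normSqPolynomial q).natDegree = 2 * p.natDegree := by
    rw [natDegree_eq_of_degree_eq (hdeg.trans degree_mul.symm), natDegree_mul hp hp, two_mul]
  have hroots : {x : ℝ | ‖p.eval (x : 𝕜)‖ = ‖q.eval (x : 𝕜)‖} ⊆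
      {x : ℝ | (normSqPolynomial p - normSqPolynomial q).eval (x : 𝕜) = 0} := by
    intro x (hx : ‖p.eval (x : 𝕜)‖ = ‖q.eval (x : 𝕜)‖)
    simp [eval_ofReal_normSqPolynomial, hx]
  have hcard := (Set.encard_le_encard hroots).trans (encard_setOf_eval_ofReal_eq_zero_le hne)
  rw [hnat] at hcard
  exact_mod_cast hcard

end RCLike

theorem degree_comp_C_mul_X {R : Type*} [Semiring R] [NoZeroDivisors R] {c : R} (hc : c ≠ 0)
    (p : R[X]) :
    (p.comp (C c * X)).degree = p.degree := by
  have hcomp : p.comp (C c * X) = 0 ↔ p = 0 :=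
    comp_C_mul_X_eq_zero_iff (mem_nonZeroDivisors_of_ne_zero hc)
  obtain rfl | hp := eq_or_ne p 0
  · rw [zero_comp]
  · rw [degree_eq_natDegree (hcomp.not.mpr hp), degree_eq_natDegree hp, natDegree_comp,
      natDegree_C_mul_X c hc, mul_one]

theorem norm_eq_norm_of_add_exp_mul_eq_zero {z w : ℂ} {ω τ : ℝ}
    (h : z + Complex.exp (-(Complex.I * ω * τ)) * w = 0) : ‖z‖ = ‖w‖ := by
  have hexp : ‖Complex.exp (-(Complex.I * ω * τ))‖ = 1 := by simp [Complex.norm_exp]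
  rw [eq_neg_of_add_eq_zero_left h, norm_neg, norm_mul, hexp, one_mul]

theorem encard_quasiPolynomial_crossing_le {p q : ℂ[X]} (hqp : q.degree < p.degree) :
    {ω : ℝ | ∃ τ : ℝ, p.eval (Complex.I * ω) +
      Complex.exp (-(Complex.I * ω * τ)) * q.eval (Complex.I * ω) = 0}.encard ≤
        2 * p.natDegree := by
  have hcomp : (q.comp (C Complex.I * X)).degree < (p.comp (C Complex.I * X)).degree := by
    rwa [degree_comp_C_mul_X Complex.I_ne_zero, degree_comp_C_mul_X Complex.I_ne_zero]
  have hbound := encard_setOf_norm_eval_ofReal_eq_le hcomp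
  rw [natDegree_eq_of_degree_eq (degree_comp_C_mul_X Complex.I_ne_zero p)] at hbound
  refine (Set.encard_le_encard ?_).trans hbound
  rintro ω ⟨τ, h⟩
  simpa using norm_eq_norm_of_add_exp_mul_eq_zero h

section RankOne

variable {n R : Type*} [Fintype n] [DecidableEq n] [CommRing R]

-- Bordering `B` by the column `c • u` and the row `-v` confines `c` to one column.
theorem det_add_smul_vecMulVec (B : Matrix n n R) (u v : n → R) (c : R) :
    (B + c • vecMulVec u v).det = B.det + c * ((B + vecMulVec u v).det - B.det) := by
  let N : Matrix (n ⊕ Unit) (n ⊕ Unit) R := fromBlocks B 0 (-replicateRow Unit v) 1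
  have hborder (t : R) : (B + t • vecMulVec u v).det =
      B.det + t * (N.updateCol (Sum.inr ()) (Sum.elim u 0)).det := by
    have hcol : N.updateCol (Sum.inr ()) (Sum.elim (0 : n → R) 1 + t • Sum.elim u 0) =
        fromBlocks B (replicateCol Unit (t • u)) (-replicateRow Unit v) 1 := by
      ext (i | i) (j | j) <;> simp [N]
    have hself : N.updateCol (Sum.inr ()) (Sum.elim (0 : n → R) 1) = N := by
      ext (i | i) (j | j) <;> simp [N]
    calc (B + t • vecMulVec u v).det
        = (fromBlocks B (replicateCol Unit (t • u)) (-replicateRow Unit v) 1).det := by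
          rw [det_fromBlocks_one₂₂, Matrix.mul_neg, sub_neg_eq_add, ← vecMulVec_eq, smul_vecMulVec]
      _ = N.det + t * (N.updateCol (Sum.inr ()) (Sum.elim u 0)).det := by
          rw [← hcol, det_updateCol_add, det_updateCol_smul, hself]
      _ = B.det + t * (N.updateCol (Sum.inr ()) (Sum.elim u 0)).det := by
          rw [det_fromBlocks_zero₁₂, det_one, mul_one]
  have hone := hborder 1
  rw [one_smul, one_mul] at hone
  rw [hborder c, hone, add_sub_cancel_left]

theorem det_smul_one_sub_sub_smul_vecMulVec (A : Matrix n n R) (u v : n → R) (s z : R) :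
    (s • (1 : Matrix n n R) - A - z • vecMulVec u v).det =
      A.charpoly.eval s + z * ((A + vecMulVec u v).charpoly - A.charpoly).eval s := by
  have haffine := det_add_smul_vecMulVec (s • (1 : Matrix n n R) - A) (-u) v z
  rw [neg_vecMulVec, smul_neg, ← sub_eq_add_neg, ← sub_eq_add_neg] at haffine
  rw [haffine, eval_sub, eval_charpoly, eval_charpoly, scalar_apply, ← smul_one_eq_diagonal,
    sub_sub]

theorem degree_charpoly_sub_charpoly_lt [Nontrivial R] (A B : Matrix n n R) :
    (B.charpoly - A.charpoly).degree < A.charpoly.degree :=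
  degree_sub_lt_right (by rw [charpoly_degree_eq_dim, charpoly_degree_eq_dim])
    A.charpoly_monic.ne_zero
    (B.charpoly_monic.leadingCoeff.trans A.charpoly_monic.leadingCoeff.symm)

end RankOne

theorem map_ofReal_fromBlocks_zero_zero_eq_vecMulVec (α β : ℝ) :
    (fromBlocks (0 : Matrix (Fin 2) (Fin 2) ℝ) 0 (-!![0, α; 0, 0]) (-!![0, β; 0, 0])).map
        Complex.ofReal =
      vecMulVec (Sum.elim 0 ![1, 0]) (Sum.elim ![0, -(α : ℂ)] ![0, -(β : ℂ)]) := by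
  ext (i | i) (j | j) <;> fin_cases i <;> fin_cases j <;> simp [vecMulVec_apply]

theorem crossing_frequencies_finite_general {n : Type*} [Fintype n] [DecidableEq n]
    (A : Matrix n n ℂ) (u v : n → ℂ) :
    {ω : ℝ | ∃ τ : ℝ,
      ((Complex.I * (ω : ℂ)) • (1 : Matrix n n ℂ) - A -
        Complex.exp (-(Complex.I * (ω : ℂ) * (τ : ℂ))) • vecMulVec u v).det = 0}.encard ≤
      2 * Fintype.card n := by
  simp_rw [det_smul_one_sub_sub_smul_vecMulVec]
  rw [← A.charpoly_natDegree_eq_dim]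
  exact encard_quasiPolynomial_crossing_le (degree_charpoly_sub_charpoly_lt A _)

/-- The set of real crossing frequencies `ω`, i.e. those for which some real delay `τ`
yields `det(i·ω·I₄ − A − e^{−i·ω·τ}·A_d) = 0`, is finite with at most 8 elements. -/
theorem crossing_frequencies_finite
    (γ lam₁ rg ch σ ν₁ : ℝ)
    (hγ : 0 < γ) (hlam : 0 < lam₁) (hr : 0 < rg) (hc : 0 < ch) (hσ : 0 < σ) (hν : 0 < ν₁)
    (M C K : Matrix (Fin 2) (Fin 2) ℝ)
    (hM : M = !![1, -12 * rg * σ / ch; 0, 1])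
    (hC : C = !![γ / 8, 0; 0, γ / 8])
    (hK : K = !![ν₁ ^ 2, -12 * rg * σ / ch; -γ / 8, lam₁ ^ 2])
    (a b : ℝ)
    (E F : Matrix (Fin 2) (Fin 2) ℝ)
    (hE : E = !![0, 3777 * ν₁ ^ 2 * a; 0, 0])
    (hF : F = !![0, 3777 * ν₁ ^ 2 * b; 0, 0])
    (A Ad : Matrix (Fin 2 ⊕ Fin 2) (Fin 2 ⊕ Fin 2) ℂ)
    (hA : A = (Matrix.fromBlocks 0 1 (-(M⁻¹ * K) + E) (-(M⁻¹ * C) + F)).map Complex.ofReal)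
    (hAd : Ad = (Matrix.fromBlocks 0 0 (-E) (-F)).map Complex.ofReal) :
    {ω : ℝ | ∃ τ : ℝ,
      ((Complex.I * (ω : ℂ)) • (1 : Matrix (Fin 2 ⊕ Fin 2) (Fin 2 ⊕ Fin 2) ℂ) - A -
        Complex.exp (-(Complex.I * (ω : ℂ) * (τ : ℂ))) • Ad).det = 0}.Finite ∧
    {ω : ℝ | ∃ τ : ℝ,
      ((Complex.I * (ω : ℂ)) • (1 : Matrix (Fin 2 ⊕ Fin 2) (Fin 2 ⊕ Fin 2) ℂ) - A -
        Complex.exp (-(Complex.I * (ω : ℂ) * (τ : ℂ))) • Ad).det = 0}.ncard ≤ 8 := by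
  rw [hAd, hE, hF, map_ofReal_fromBlocks_zero_zero_eq_vecMulVec,
    ← Set.encard_le_coe_iff_finite_ncard_le]
  exact crossing_frequencies_finite_general A _ _
end
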